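/- arXiv:1109.0854 — 11 statements merged into one kernel-verified Lean document; each statement's English description precedes it below -/
import Mathlib

section
/- Let A be a linear relation between X and Z and B a linear relation between Y and Z. The following are equivalent: (i) there exists a linear relation C between X and Y such that A ⊆ B∘C; (ii) ran A ⊆ ran B; (iii) A ⊆ B∘(B⁻¹)∘A. -/
/-!
Linear relations between vector spaces, following Popovici–Sebestyén,
"Factorizations of Linear Relations".

A linear relation between `X` and `Y` is a linear subspace of `X × Y`,
formalized as `Submodule 𝕂 (X × Y)`.
-/

universe u

namespace LinRel

variable {𝕂 : Type u} [Field 𝕂]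
variable {X Y Z : Type u} [AddCommGroup X] [Module 𝕂 X]
  [AddCommGroup Y] [Module 𝕂 Y] [AddCommGroup Z] [Module 𝕂 Z]

/-- The domain of a linear relation. -/
def dom (R : Submodule 𝕂 (X × Y)) : Submodule 𝕂 X :=
  R.map (LinearMap.fst 𝕂 X Y)

/-- The range of a linear relation. -/
def ran (R : Submodule 𝕂 (X × Y)) : Submodule 𝕂 Y :=
  R.map (LinearMap.snd 𝕂 X Y)

/-- The kernel of a linear relation: `{x | (x, 0) ∈ R}`. -/
def ker (R : Submodule 𝕂 (X × Y)) : Submodule 𝕂 X :=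
  R.comap ((LinearMap.id : X →ₗ[𝕂] X).prod (0 : X →ₗ[𝕂] Y))

/-- The multivalued part of a linear relation: `{y | (0, y) ∈ R}`. -/
def mul (R : Submodule 𝕂 (X × Y)) : Submodule 𝕂 Y :=
  R.comap ((0 : Y →ₗ[𝕂] X).prod (LinearMap.id : Y →ₗ[𝕂] Y))

/-- The inverse of a linear relation: `{(y, x) | (x, y) ∈ R}`. -/
def inv (R : Submodule 𝕂 (X × Y)) : Submodule 𝕂 (Y × X) :=
  R.map ((LinearMap.snd 𝕂 X Y).prod (LinearMap.fst 𝕂 X Y))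

/-- The product (composition) of two linear relations:
`S ∘ R = {(x, z) | ∃ y, (x, y) ∈ R ∧ (y, z) ∈ S}`. -/
def comp (S : Submodule 𝕂 (Y × Z)) (R : Submodule 𝕂 (X × Y)) : Submodule 𝕂 (X × Z) where
  carrier := {p | ∃ y, (p.1, y) ∈ R ∧ (y, p.2) ∈ S}
  add_mem' := by
    rintro ⟨a, c⟩ ⟨a', c'⟩ ⟨y, h1, h2⟩ ⟨y', h1', h2'⟩
    exact ⟨y + y', R.add_mem h1 h1', S.add_mem h2 h2'⟩
  zero_mem' := ⟨0, R.zero_mem, S.zero_mem⟩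
  smul_mem' := by
    rintro c ⟨a, b⟩ ⟨y, h1, h2⟩
    exact ⟨c • y, R.smul_mem c h1, S.smul_mem c h2⟩

/-- The image `R(X₀)` of a subspace `X₀` under a linear relation `R`. -/
def img (R : Submodule 𝕂 (X × Y)) (X₀ : Submodule 𝕂 X) : Submodule 𝕂 Y :=
  ran (R ⊓ X₀.prod ⊤)

/-- The preimage `R⁻¹(Y₀)` of a subspace `Y₀` under a linear relation `R`. -/
def preimg (R : Submodule 𝕂 (X × Y)) (Y₀ : Submodule 𝕂 Y) : Submodule 𝕂 X :=
  img (inv R) Y₀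

end LinRel


open LinRel

variable {𝕂 : Type u} [Field 𝕂]
variable {X Y Z : Type u} [AddCommGroup X] [Module 𝕂 X]
  [AddCommGroup Y] [Module 𝕂 Y] [AddCommGroup Z] [Module 𝕂 Z]

/-- Theorem 2.2: `A ⊆ BC` for some linear relation `C` iff `ran A ⊆ ran B`
iff `A ⊆ B B⁻¹ A`. -/
theorem statement_0 (A : Submodule 𝕂 (X × Z)) (B : Submodule 𝕂 (Y × Z)) :
    ((∃ C : Submodule 𝕂 (X × Y), A ≤ comp B C) ↔ ran A ≤ ran B) ∧
    (ran A ≤ ran B ↔ A ≤ comp B (comp (inv B) A)) := by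
  have h1 : ∀ C : Submodule 𝕂 (X × Y), A ≤ comp B C → ran A ≤ ran B := by
    rintro C h _ ⟨⟨x, z⟩, hA, rfl⟩
    obtain ⟨y, _, hB⟩ := h hA
    exact ⟨(y, z), hB, rfl⟩
  have h2 : ran A ≤ ran B → A ≤ comp B (comp (inv B) A) := by
    rintro h ⟨x, z⟩ hA
    obtain ⟨⟨y, z'⟩, hB, hz⟩ := h ⟨(x, z), hA, rfl⟩
    have hz' : z' = z := hz
    subst hz'
    exact ⟨y, ⟨z', hA, ⟨(y, z'), hB, rfl⟩⟩, hB⟩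
  exact ⟨⟨fun ⟨C, h⟩ => h1 C h, fun h => ⟨_, h2 h⟩⟩, h2, h1 _⟩
end

section
/- Let A be a linear relation between X and Z and B a linear relation between X and Y. The following are equivalent: (i) there exists a linear relation C between Y and Z such that A ⊆ C∘B; (ii) dom A ⊆ dom B; (iii) A ⊆ A∘(B⁻¹)∘B. -/
/-!
Linear relations between vector spaces, following Popovici–Sebestyén,
"Factorizations of Linear Relations".

A linear relation between `X` and `Y` is a linear subspace of `X × Y`,
formalized as `Submodule 𝕂 (X × Y)`.
-/

universe u

open LinRel

variable {𝕂 : Type u} [Field 𝕂]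
variable {X Y Z : Type u} [AddCommGroup X] [Module 𝕂 X]
  [AddCommGroup Y] [Module 𝕂 Y] [AddCommGroup Z] [Module 𝕂 Z]

/-- Corollary 2.3: `A ⊆ CB` for some linear relation `C` iff `dom A ⊆ dom B`
iff `A ⊆ A B⁻¹ B`. -/
theorem statement_1 (A : Submodule 𝕂 (X × Z)) (B : Submodule 𝕂 (X × Y)) :
    ((∃ C : Submodule 𝕂 (Y × Z), A ≤ comp C B) ↔ dom A ≤ dom B) ∧
    (dom A ≤ dom B ↔ A ≤ comp A (comp (inv B) B)) := by
  have h12 : ∀ C : Submodule 𝕂 (Y × Z), A ≤ comp C B → dom A ≤ dom B := by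
    rintro C h x ⟨p, hp, rfl⟩
    obtain ⟨y, h1, -⟩ := h hp
    exact ⟨(p.1, y), h1, rfl⟩
  have h23 : dom A ≤ dom B → A ≤ comp A (comp (inv B) B) := by
    rintro h ⟨x, z⟩ hp
    obtain ⟨⟨x', y⟩, hq, hx⟩ := h ⟨(x, z), hp, rfl⟩
    change x' = x at hx
    subst hx
    exact ⟨x', ⟨y, hq, ⟨(x', y), hq, rfl⟩⟩, hp⟩
  have h31 : A ≤ comp A (comp (inv B) B) → A ≤ comp (comp A (inv B)) B := by
    intro h p hp
    obtain ⟨x, ⟨y, h1, h2⟩, h3⟩ := h hp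
    exact ⟨y, h1, x, h2, h3⟩
  exact ⟨⟨fun ⟨C, h⟩ => h12 C h, fun h => ⟨_, h31 (h23 h)⟩⟩, h23, fun h => h12 _ (h31 h)⟩
end

section
/- Let A be a linear relation between X and Z and B a linear relation between Y and Z. Then A = B∘(B⁻¹)∘A if and only if mul B ⊆ ran A ⊆ ran B and A⁻¹(mul B) ⊆ ker A. In particular, if B is (the graph of) an operator (mul B = {0}) and ran A ⊆ ran B, then the linear relation C = (B⁻¹)∘A satisfies A = B∘C. -/
/-!
Linear relations between vector spaces, following Popovici–Sebestyén,
"Factorizations of Linear Relations".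

A linear relation between `X` and `Y` is a linear subspace of `X × Y`,
formalized as `Submodule 𝕂 (X × Y)`.
-/

universe u

open LinRel

variable {𝕂 : Type u} [Field 𝕂]
variable {X Y Z : Type u} [AddCommGroup X] [Module 𝕂 X]
  [AddCommGroup Y] [Module 𝕂 Y] [AddCommGroup Z] [Module 𝕂 Z]

theorem LinRel.mem_comp_inv_aux (A : Submodule 𝕂 (X × Z)) (B : Submodule 𝕂 (Y × Z)) (x : X) (z : Z) :
    (x, z) ∈ comp B (comp (inv B) A) ↔ ∃ y w, (x, w) ∈ A ∧ (y, w) ∈ B ∧ (y, z) ∈ B := by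
  constructor
  · rintro ⟨y, ⟨w, hA, hB⟩, hz⟩
    obtain ⟨⟨a, b⟩, hp, he⟩ := hB
    simp at he
    obtain ⟨rfl, rfl⟩ := he
    exact ⟨_, _, hA, hp, hz⟩
  · rintro ⟨y, w, hA, hB, hz⟩
    exact ⟨y, ⟨w, hA, ⟨(y, w), hB, rfl⟩⟩, hz⟩

theorem LinRel.mem_ran_aux (A : Submodule 𝕂 (X × Z)) (z : Z) :
    z ∈ ran A ↔ ∃ x, (x, z) ∈ A := by
  simp [ran]

theorem LinRel.mem_preimg_aux (A : Submodule 𝕂 (X × Z)) (M : Submodule 𝕂 Z) (x : X) :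
    x ∈ preimg A M ↔ ∃ z, (x, z) ∈ A ∧ z ∈ M := by
  simp [preimg, img, ran, inv]

theorem LinRel.mem_mul_aux (A : Submodule 𝕂 (X × Z)) (z : Z) :
    z ∈ mul A ↔ (0, z) ∈ A := Iff.rfl

theorem LinRel.mem_ker_aux (A : Submodule 𝕂 (X × Z)) (x : X) :
    x ∈ ker A ↔ (x, 0) ∈ A := Iff.rfl

theorem LinRel.eq_aux (A : Submodule 𝕂 (X × Z)) (B : Submodule 𝕂 (Y × Z))
    (hm : mul B ≤ mul A) (hr : ran A ≤ ran B) : A = comp B (comp (inv B) A) := by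
  ext ⟨x, z⟩
  rw [mem_comp_inv_aux]
  constructor
  · intro h
    obtain ⟨y, hy⟩ := (mem_ran_aux B z).1 (hr ((mem_ran_aux A z).2 ⟨x, h⟩))
    exact ⟨y, z, h, hy, hy⟩
  · rintro ⟨y, w, hA, hw, hz⟩
    have h1 : z - w ∈ mul B := by
      have := B.sub_mem hz hw
      rw [mem_mul_aux]
      simpa using this
    have h2 := A.add_mem hA ((mem_mul_aux A _).1 (hm h1))
    simpa using h2

/-- Corollary 2.4: `A = B B⁻¹ A` iff `mul B ⊆ ran A ⊆ ran B` and
`A⁻¹(mul B) ⊆ ker A`; in particular, if `B` is an operator with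
`ran A ⊆ ran B` then `C = B⁻¹ A` satisfies `A = BC`. -/
theorem statement_4 (A : Submodule 𝕂 (X × Z)) (B : Submodule 𝕂 (Y × Z)) :
    (A = comp B (comp (inv B) A) ↔
      (mul B ≤ ran A ∧ ran A ≤ ran B ∧ preimg A (mul B) ≤ ker A)) ∧
    (mul B = ⊥ → ran A ≤ ran B → A = comp B (comp (inv B) A)) := by
  refine ⟨⟨fun h => ?_, ?_⟩, fun hb hr => eq_aux A B (by rw [hb]; exact bot_le) hr⟩
  · have key : ∀ x z, (x, z) ∈ A ↔ ∃ y w, (x, w) ∈ A ∧ (y, w) ∈ B ∧ (y, z) ∈ B := by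
      intro x z
      rw [← mem_comp_inv_aux, ← h]
    have hm : ∀ z ∈ mul B, (0, z) ∈ A := fun z hz =>
      (key 0 z).2 ⟨0, 0, A.zero_mem, B.zero_mem, hz⟩
    refine ⟨fun z hz => (mem_ran_aux A z).2 ⟨0, hm z hz⟩, fun z hz => ?_, fun x hx => ?_⟩
    · obtain ⟨x, hx⟩ := (mem_ran_aux A z).1 hz
      obtain ⟨y, w, -, -, hy⟩ := (key x z).1 hx
      exact (mem_ran_aux B z).2 ⟨y, hy⟩
    · obtain ⟨z, hz, hzm⟩ := (mem_preimg_aux A _ x).1 hx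
      have := A.sub_mem hz (hm z hzm)
      rw [mem_ker_aux]
      simpa using this
  · rintro ⟨h1, h2, h3⟩
    refine eq_aux A B (fun z hz => ?_) h2
    obtain ⟨x, hx⟩ := (mem_ran_aux A z).1 (h1 hz)
    have hk := (mem_ker_aux A x).1 (h3 ((mem_preimg_aux A _ x).2 ⟨z, hx, hz⟩))
    have := A.sub_mem hx hk
    rw [mem_mul_aux]
    simpa using this
end

section
/- Let A be a linear relation between X and Z and B a linear relation between X and Y. Then A = A∘(B⁻¹)∘B if and only if ker B ⊆ dom A ⊆ dom B and A(ker B) ⊆ mul A. In particular, if B⁻¹ is (the graph of) an operator (i.e. ker B = {0} — mul(B⁻¹) = {0}) and dom A ⊆ dom B, then the linear relation C = A∘(B⁻¹) satisfies A = C∘B. -/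
/-!
Linear relations between vector spaces, following Popovici–Sebestyén,
"Factorizations of Linear Relations".

A linear relation between `X` and `Y` is a linear subspace of `X × Y`,
formalized as `Submodule 𝕂 (X × Y)`.
-/

universe u

open LinRel

variable {𝕂 : Type u} [Field 𝕂]
variable {X Y Z : Type u} [AddCommGroup X] [Module 𝕂 X]
  [AddCommGroup Y] [Module 𝕂 Y] [AddCommGroup Z] [Module 𝕂 Z]

theorem aux_mem (A : Submodule 𝕂 (X × Z)) (B : Submodule 𝕂 (X × Y)) (x : X) (z : Z) :
    (x, z) ∈ comp (comp A (inv B)) B ↔ ∃ y x', (x, y) ∈ B ∧ (x', y) ∈ B ∧ (x', z) ∈ A := by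
  constructor
  · rintro ⟨y, h1, x', ⟨⟨a, b⟩, hab, he⟩, h3⟩
    simp only [LinearMap.prod_apply, Function.prod_apply, LinearMap.snd_apply,
      LinearMap.fst_apply, Prod.mk.injEq] at he
    obtain ⟨rfl, rfl⟩ := he
    exact ⟨b, a, h1, hab, h3⟩
  · rintro ⟨y, x', h1, h2, h3⟩
    exact ⟨y, h1, x', ⟨(x', y), h2, rfl⟩, h3⟩

theorem aux_iff (A : Submodule 𝕂 (X × Z)) (B : Submodule 𝕂 (X × Y)) :
    A = comp (comp A (inv B)) B ↔
      (ker B ≤ dom A ∧ dom A ≤ dom B ∧ img A (ker B) ≤ mul A) := by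
  constructor
  · intro h
    have key : ∀ x z, (x, z) ∈ A ↔ ∃ y x', (x, y) ∈ B ∧ (x', y) ∈ B ∧ (x', z) ∈ A := by
      intro x z
      rw [← aux_mem, ← h]
    refine ⟨?_, ?_, ?_⟩
    · intro x hx
      exact ⟨(x, 0), (key x 0).2 ⟨0, 0, hx, B.zero_mem, A.zero_mem⟩, rfl⟩
    · rintro _ ⟨⟨x, z⟩, hA, rfl⟩
      obtain ⟨y, _, h1, _⟩ := (key x z).1 hA
      exact ⟨(x, y), h1, rfl⟩
    · rintro _ ⟨⟨x, z⟩, ⟨hA, hk⟩, rfl⟩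
      exact (key 0 z).2 ⟨0, x, B.zero_mem, hk.1, hA⟩
  · rintro ⟨h1, h2, h3⟩
    ext ⟨x, z⟩
    rw [aux_mem]
    constructor
    · intro hA
      obtain ⟨⟨x', y⟩, hB, rfl⟩ := h2 ⟨(x, z), hA, rfl⟩
      exact ⟨y, _, hB, hB, hA⟩
    · rintro ⟨y, x', hx, hx', hA⟩
      have hk : x - x' ∈ ker B := by
        have h := B.sub_mem hx hx'
        rw [Prod.mk_sub_mk, sub_self] at h
        exact h
      obtain ⟨⟨a, w⟩, hw, ha⟩ := h1 hk
      have ha : a = x - x' := ha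
      subst ha
      have hm : ((0 : X), w) ∈ A := h3 ⟨(x - x', w), ⟨hw, hk, trivial⟩, rfl⟩
      have h := A.add_mem (A.sub_mem hw hm) hA
      simpa using h

/-- Corollary 2.5: `A = A B⁻¹ B` iff `ker B ⊆ dom A ⊆ dom B` and
`A(ker B) ⊆ mul A`; in particular, if `B⁻¹` is an operator
(`ker B = {0}`) and `dom A ⊆ dom B` then `C = A B⁻¹` satisfies `A = CB`. -/
theorem statement_5 (A : Submodule 𝕂 (X × Z)) (B : Submodule 𝕂 (X × Y)) :
    (A = comp (comp A (inv B)) B ↔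
      (ker B ≤ dom A ∧ dom A ≤ dom B ∧ img A (ker B) ≤ mul A)) ∧
    (ker B = ⊥ → dom A ≤ dom B → A = comp (comp A (inv B)) B) := by
  refine ⟨aux_iff A B, fun hk hd => (aux_iff A B).2 ⟨?_, hd, ?_⟩⟩
  · rw [hk]
    exact bot_le
  · rintro _ ⟨⟨x, z⟩, ⟨hA, hx⟩, rfl⟩
    have h0 : x ∈ ker B := hx.1
    rw [hk, Submodule.mem_bot] at h0
    subst h0
    exact hA
end

section
/- Let A be a linear relation between X and Z and B a linear relation between Y and Z. The following are equivalent: (i) there exists a linear relation C between X and Y which is (the graph of) an operator such that A ⊆ B∘C; (ii) ran A ⊆ ran B and mul A ⊆ mul B; (iii) for every x ∈ dom A there exists y ∈ dom B such that A(x) ⊆ B(y). -/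
/-!
Linear relations between vector spaces, following Popovici–Sebestyén,
"Factorizations of Linear Relations".

A linear relation between `X` and `Y` is a linear subspace of `X × Y`,
formalized as `Submodule 𝕂 (X × Y)`.
-/

universe u

open LinRel

variable {𝕂 : Type u} [Field 𝕂]
variable {X Y Z : Type u} [AddCommGroup X] [Module 𝕂 X]
  [AddCommGroup Y] [Module 𝕂 Y] [AddCommGroup Z] [Module 𝕂 Z]

theorem quasi_section {M N : Type u} [AddCommGroup M] [Module 𝕂 M] [AddCommGroup N] [Module 𝕂 N]
    (f : M →ₗ[𝕂] N) (P : Submodule 𝕂 M) :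
    ∃ g : N →ₗ[𝕂] M, ∀ m ∈ P, g (f m) ∈ P ∧ f (g (f m)) = f m := by
  let h : P →ₗ[𝕂] N := f.comp P.subtype
  obtain ⟨r, hr⟩ := h.rangeRestrict.exists_rightInverse_of_surjective h.range_rangeRestrict
  obtain ⟨g, hg⟩ := LinearMap.exists_extend r
  refine ⟨P.subtype.comp g, fun m hm => ⟨(g (f m)).2, ?_⟩⟩
  have h1 : g (f m) = r (h.rangeRestrict ⟨m, hm⟩) := by
    rw [← hg]; rfl
  have h2 := LinearMap.congr_fun hr (h.rangeRestrict ⟨m, hm⟩)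
  have h3 := congrArg Subtype.val h2
  change f (g (f m) : M) = f m
  rw [h1]
  exact h3

/-- Theorem 3.1: existence of an operator `C` with `A ⊆ BC` is equivalent to
`ran A ⊆ ran B` and `mul A ⊆ mul B`, and also to: for every `x ∈ dom A`
there is `y ∈ dom B` with `A(x) ⊆ B(y)`. -/
theorem statement_6 (A : Submodule 𝕂 (X × Z)) (B : Submodule 𝕂 (Y × Z)) :
    ((∃ C : Submodule 𝕂 (X × Y), mul C = ⊥ ∧ A ≤ comp B C) ↔
      (ran A ≤ ran B ∧ mul A ≤ mul B)) ∧
    ((ran A ≤ ran B ∧ mul A ≤ mul B) ↔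
      (∀ x ∈ dom A, ∃ y ∈ dom B,
        {z : Z | (x, z) ∈ A} ⊆ {z : Z | (y, z) ∈ B})) := by
  have h12 : (∃ C : Submodule 𝕂 (X × Y), mul C = ⊥ ∧ A ≤ comp B C) →
      (∀ x ∈ dom A, ∃ y ∈ dom B, {z : Z | (x, z) ∈ A} ⊆ {z : Z | (y, z) ∈ B}) := by
    rintro ⟨C, hC, hA⟩ x ⟨⟨x', z⟩, hz, rfl⟩
    obtain ⟨y, hy, hyz⟩ := hA hz
    refine ⟨y, ⟨(y, z), hyz, rfl⟩, fun w hw => ?_⟩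
    obtain ⟨y', hy', hyw⟩ := hA hw
    have h0 : y' - y ∈ mul C := by
      change ((0 : X), y' - y) ∈ C
      simpa using C.sub_mem hy' hy
    rw [hC, Submodule.mem_bot, sub_eq_zero] at h0
    subst h0
    exact hyw
  have h23 : (∀ x ∈ dom A, ∃ y ∈ dom B, {z : Z | (x, z) ∈ A} ⊆ {z : Z | (y, z) ∈ B}) →
      (ran A ≤ ran B ∧ mul A ≤ mul B) := by
    intro h
    constructor
    · rintro z ⟨⟨x, z⟩, hz, rfl⟩
      obtain ⟨y, -, hy⟩ := h x ⟨(x, z), hz, rfl⟩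
      exact ⟨(y, z), hy hz, rfl⟩
    · intro z hz
      obtain ⟨y, -, hy⟩ := h 0 (Submodule.zero_mem _)
      have h1 : (y, z) ∈ B := hy hz
      have h2 : (y, (0 : Z)) ∈ B := hy A.zero_mem
      change ((0 : Y), z) ∈ B
      simpa using B.sub_mem h1 h2
  have h31 : (ran A ≤ ran B ∧ mul A ≤ mul B) →
      (∃ C : Submodule 𝕂 (X × Y), mul C = ⊥ ∧ A ≤ comp B C) := by
    rintro ⟨hr, hm⟩
    obtain ⟨s, hs⟩ := quasi_section (LinearMap.fst 𝕂 X Z) A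
    obtain ⟨t, ht⟩ := quasi_section (LinearMap.snd 𝕂 Y Z) B
    let cl : X →ₗ[𝕂] Y := (LinearMap.fst 𝕂 Y Z).comp (t.comp ((LinearMap.snd 𝕂 X Z).comp s))
    refine ⟨cl.graph, ?_, ?_⟩
    · rw [eq_bot_iff]
      intro y hy
      have hy' : ((0 : X), y) ∈ cl.graph := hy
      rw [LinearMap.mem_graph_iff] at hy'
      simpa using hy'
    · rintro ⟨x, z⟩ hxz
      refine ⟨cl x, by simp [LinearMap.mem_graph_iff], ?_⟩
      obtain ⟨h1, h2⟩ := hs _ hxz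
      change s x ∈ A at h1
      change (s x).1 = x at h2
      obtain ⟨⟨y, w⟩, hb, hw⟩ := hr ⟨s x, h1, rfl⟩
      change w = (s x).2 at hw
      subst hw
      obtain ⟨h3, h4⟩ := ht _ hb
      change t (s x).2 ∈ B at h3
      change (t (s x).2).2 = (s x).2 at h4
      have h5 : z - (s x).2 ∈ mul A := by
        change ((0 : X), z - (s x).2) ∈ A
        have h6 := A.sub_mem hxz h1
        have h7 : (x, z) - s x = (0, z - (s x).2) := by
          ext <;> simp [h2]
        rwa [h7] at h6
      have h8 : ((0 : Y), z - (s x).2) ∈ B := hm h5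
      have h9 := B.add_mem h3 h8
      have h10 : t (s x).2 + (0, z - (s x).2) = (cl x, z) := by
        ext <;> simp [h4, cl]
      rwa [h10] at h9
  exact ⟨⟨fun h => h23 (h12 h), h31⟩, ⟨fun h => h12 (h31 h), h23⟩⟩
end

section
/- Let A be a linear relation between X and Z which is (the graph of) an operator, and B a linear relation between Y and Z. Then there exists a linear relation C between X and Y which is (the graph of) an operator with A ⊆ B∘C if and only if ran A ⊆ ran B. -/
/-!
Linear relations between vector spaces, following Popovici–Sebestyén,
"Factorizations of Linear Relations".

A linear relation between `X` and `Y` is a linear subspace of `X × Y`,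
formalized as `Submodule 𝕂 (X × Y)`.
-/

universe u

open LinRel

variable {𝕂 : Type u} [Field 𝕂]
variable {X Y Z : Type u} [AddCommGroup X] [Module 𝕂 X]
  [AddCommGroup Y] [Module 𝕂 Y] [AddCommGroup Z] [Module 𝕂 Z]

/-- Corollary 3.2: if `A` is an operator, then there exists an operator `C`
with `A ⊆ BC` iff `ran A ⊆ ran B`. -/
theorem statement_7 (A : Submodule 𝕂 (X × Z)) (B : Submodule 𝕂 (Y × Z))
    (hA : mul A = ⊥) :
    (∃ C : Submodule 𝕂 (X × Y), mul C = ⊥ ∧ A ≤ comp B C) ↔ ran A ≤ ran B := by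
  constructor
  · rintro ⟨C, -, hC⟩ z ⟨⟨x, z'⟩, hxz, rfl⟩
    obtain ⟨y, -, hy⟩ := hC hxz
    exact ⟨(y, z'), hy, rfl⟩
  · intro h
    let g : B →ₗ[𝕂] ran B := (LinearMap.snd 𝕂 Y Z).restrict
      (fun p hp => Submodule.mem_map_of_mem hp)
    have hg : Function.Surjective g := by
      rintro ⟨z, p, hp, rfl⟩
      exact ⟨⟨p, hp⟩, rfl⟩
    obtain ⟨s, hs⟩ := g.exists_rightInverse_of_surjective (LinearMap.range_eq_top.2 hg)
    let t : A →ₗ[𝕂] ran B := (LinearMap.snd 𝕂 X Z).restrict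
      (fun p hp => h (Submodule.mem_map_of_mem hp))
    let f : A →ₗ[𝕂] Y := LinearMap.fst 𝕂 Y Z ∘ₗ B.subtype ∘ₗ s ∘ₗ t
    refine ⟨LinearMap.range ((LinearMap.fst 𝕂 X Z ∘ₗ A.subtype).prod f), ?_, ?_⟩
    · rw [eq_bot_iff]
      rintro y ⟨⟨⟨x, z⟩, ha⟩, hy⟩
      have h1 : x = 0 := congrArg Prod.fst hy
      have h2 : f ⟨(x, z), ha⟩ = y := congrArg Prod.snd hy
      subst h1
      have hz : z ∈ mul A := ha
      rw [hA, Submodule.mem_bot] at hz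
      subst hz
      have h3 : f ⟨(0, 0), ha⟩ = 0 := map_zero f
      rw [Submodule.mem_bot, ← h2, h3]
    · rintro ⟨x, z⟩ ha
      refine ⟨f ⟨(x, z), ha⟩, ⟨⟨(x, z), ha⟩, rfl⟩, ?_⟩
      have h1 : g (s (t ⟨(x, z), ha⟩)) = t ⟨(x, z), ha⟩ := LinearMap.congr_fun hs _
      have h2 : (s (t ⟨(x, z), ha⟩)).1.2 = z := congrArg Subtype.val h1
      have h3 := (s (t ⟨(x, z), ha⟩)).2
      have h4 : (s (t ⟨(x, z), ha⟩)).1 = (f ⟨(x, z), ha⟩, z) := Prod.ext rfl h2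
      rw [h4] at h3
      exact h3
end

section
/- Let A and B be linear relations between X and Z. The following are equivalent: (i) A ⊆ B; (ii) ker A ⊆ ker B and ran(A ∩ B) = ran A; (iii) mul A ⊆ mul B and dom(A ∩ B) = dom A. -/
/-!
Linear relations between vector spaces, following Popovici–Sebestyén,
"Factorizations of Linear Relations".

A linear relation between `X` and `Y` is a linear subspace of `X × Y`,
formalized as `Submodule 𝕂 (X × Y)`.
-/

universe u

open LinRel

variable {𝕂 : Type u} [Field 𝕂]
variable {X Y Z : Type u} [AddCommGroup X] [Module 𝕂 X]
  [AddCommGroup Y] [Module 𝕂 Y] [AddCommGroup Z] [Module 𝕂 Z]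

/-- Corollary 4.5 (Arens-type characterization): `A ⊆ B` iff
`ker A ⊆ ker B` and `ran (A ∩ B) = ran A`, iff
`mul A ⊆ mul B` and `dom (A ∩ B) = dom A`. -/
theorem statement_11 (A B : Submodule 𝕂 (X × Z)) :
    (A ≤ B ↔ (ker A ≤ ker B ∧ ran (A ⊓ B) = ran A)) ∧
    ((ker A ≤ ker B ∧ ran (A ⊓ B) = ran A) ↔
      (mul A ≤ mul B ∧ dom (A ⊓ B) = dom A)) := by
  have h1 : A ≤ B ↔ (ker A ≤ ker B ∧ ran (A ⊓ B) = ran A) := by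
    constructor
    · intro h
      exact ⟨Submodule.comap_mono h, by rw [inf_eq_left.mpr h]⟩
    · rintro ⟨hk, hr⟩ ⟨x, z⟩ hxz
      have hz : z ∈ ran (A ⊓ B) := hr ▸ Submodule.mem_map.mpr ⟨(x, z), hxz, rfl⟩
      obtain ⟨⟨x', z'⟩, ⟨hA, hB⟩, rfl⟩ := Submodule.mem_map.mp hz
      have hd : (x - x', (0 : Z)) ∈ A := by
        simpa using A.sub_mem hxz hA
      have hd' : (x - x', (0 : Z)) ∈ B := hk (show x - x' ∈ ker A from hd)
      simpa using B.add_mem hd' hB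
  have h2 : A ≤ B ↔ (mul A ≤ mul B ∧ dom (A ⊓ B) = dom A) := by
    constructor
    · intro h
      exact ⟨Submodule.comap_mono h, by rw [inf_eq_left.mpr h]⟩
    · rintro ⟨hk, hr⟩ ⟨x, z⟩ hxz
      have hz : x ∈ dom (A ⊓ B) := hr ▸ Submodule.mem_map.mpr ⟨(x, z), hxz, rfl⟩
      obtain ⟨⟨x', z'⟩, ⟨hA, hB⟩, rfl⟩ := Submodule.mem_map.mp hz
      have hd : ((0 : X), z - z') ∈ A := by
        simpa using A.sub_mem hxz hA
      have hd' : ((0 : X), z - z') ∈ B := hk (show z - z' ∈ mul A from hd)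
      simpa using B.add_mem hd' hB
  exact ⟨h1, h1.symm.trans h2⟩
end

section
/- Let R be a linear relation between X and Y. Then the codimension of ker R in dom R equals the codimension of mul R in ran R; that is, the dimension of the quotient space (dom R)/(ker R) equals the dimension of the quotient space (ran R)/(mul R). -/
/-!
Linear relations between vector spaces, following Popovici–Sebestyén,
"Factorizations of Linear Relations".

A linear relation between `X` and `Y` is a linear subspace of `X × Y`,
formalized as `Submodule 𝕂 (X × Y)`.
-/

universe u

open LinRel

variable {𝕂 : Type u} [Field 𝕂]
variable {X Y Z : Type u} [AddCommGroup X] [Module 𝕂 X]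
  [AddCommGroup Y] [Module 𝕂 Y] [AddCommGroup Z] [Module 𝕂 Z]

/-- Corollary 5.3: the codimension of `ker R` in `dom R` equals the
codimension of `mul R` in `ran R`. -/
theorem statement_13 (R : Submodule 𝕂 (X × Y)) :
    Module.rank 𝕂 (↥(dom R) ⧸ (ker R).comap (dom R).subtype) =
    Module.rank 𝕂 (↥(ran R) ⧸ (mul R).comap (ran R).subtype) := by
  let p : R →ₗ[𝕂] dom R := ((LinearMap.fst 𝕂 X Y).comp R.subtype).codRestrict (dom R)
    (fun r => ⟨r.1, r.2, rfl⟩)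
  let q : R →ₗ[𝕂] ran R := ((LinearMap.snd 𝕂 X Y).comp R.subtype).codRestrict (ran R)
    (fun r => ⟨r.1, r.2, rfl⟩)
  let f := ((ker R).comap (dom R).subtype).mkQ.comp p
  let g := ((mul R).comap (ran R).subtype).mkQ.comp q
  have hp : Function.Surjective p := by
    rintro ⟨_, r, hr, rfl⟩
    exact ⟨⟨r, hr⟩, rfl⟩
  have hq : Function.Surjective q := by
    rintro ⟨_, r, hr, rfl⟩
    exact ⟨⟨r, hr⟩, rfl⟩
  have hf : Function.Surjective f := (Submodule.mkQ_surjective _).comp hp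
  have hg : Function.Surjective g := (Submodule.mkQ_surjective _).comp hq
  have hk : LinearMap.ker f = LinearMap.ker g := by
    ext ⟨⟨x, y⟩, h⟩
    have h1 : (⟨⟨x, y⟩, h⟩ : R) ∈ LinearMap.ker f ↔ (x, (0 : Y)) ∈ R := by
      rw [LinearMap.mem_ker]
      exact Submodule.Quotient.mk_eq_zero _
    have h2 : (⟨⟨x, y⟩, h⟩ : R) ∈ LinearMap.ker g ↔ ((0 : X), y) ∈ R := by
      rw [LinearMap.mem_ker]
      exact Submodule.Quotient.mk_eq_zero _
    rw [h1, h2]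
    constructor
    · intro h'
      simpa using R.sub_mem h h'
    · intro h'
      simpa using R.sub_mem h h'
  exact (((f.quotKerEquivOfSurjective hf).symm.trans
    (Submodule.quotEquivOfEq _ _ hk)).trans (g.quotKerEquivOfSurjective hg)).rank_eq
end

section
/- Let A be a linear relation between X and Z and B a linear relation between X and Y. The following are equivalent: (i) there exists a linear relation C between Y and Z which is (the graph of) an operator such that A ⊆ C∘B; (ii) dom A ⊆ dom B and dim(mul B) ≥ dim(A(dom A ∩ ker B)) (as cardinals). -/
/-!
Linear relations between vector spaces, following Popovici–Sebestyén,
"Factorizations of Linear Relations".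

A linear relation between `X` and `Y` is a linear subspace of `X × Y`,
formalized as `Submodule 𝕂 (X × Y)`.
-/

universe u

open LinRel

variable {𝕂 : Type u} [Field 𝕂]
variable {X Y Z : Type u} [AddCommGroup X] [Module 𝕂 X]
  [AddCommGroup Y] [Module 𝕂 Y] [AddCommGroup Z] [Module 𝕂 Z]

theorem aux_factor {K V W U : Type*} [Field K] [AddCommGroup V] [Module K V]
    [AddCommGroup W] [Module K W] [AddCommGroup U] [Module K U]
    (α : V →ₗ[K] W) (ζ : V →ₗ[K] U) (h : LinearMap.ker α ≤ LinearMap.ker ζ) :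
    ∃ g : W →ₗ[K] U, ∀ v, g (α v) = ζ v := by
  obtain ⟨l, hl⟩ := LinearMap.exists_leftInverse_of_injective
    ((LinearMap.ker α).liftQ α le_rfl) (Submodule.ker_liftQ_eq_bot _ _ _ le_rfl)
  refine ⟨((LinearMap.ker α).liftQ ζ h).comp l, fun v => ?_⟩
  have := LinearMap.congr_fun hl ((LinearMap.ker α).mkQ v)
  simp at this
  simp [this]

theorem aux_section (B : Submodule 𝕂 (X × Y)) :
    ∃ s : dom B →ₗ[𝕂] Y, ∀ x : dom B, ((x : X), s x) ∈ B := by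
  let φ : B →ₗ[𝕂] dom B := ((LinearMap.fst 𝕂 X Y).comp B.subtype).codRestrict (dom B)
    (fun p => ⟨p.1, p.2, rfl⟩)
  have hφ : LinearMap.range φ = ⊤ := by
    rw [LinearMap.range_eq_top]
    rintro ⟨x, ⟨p, hp, rfl⟩⟩
    exact ⟨⟨p, hp⟩, rfl⟩
  obtain ⟨t, ht⟩ := LinearMap.exists_rightInverse_of_surjective φ hφ
  refine ⟨(LinearMap.snd 𝕂 X Y).comp (B.subtype.comp t), fun x => ?_⟩
  have h1 : ((t x).1.1 : X) = x := congrArg Subtype.val (LinearMap.congr_fun ht x)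
  have h2 := (t x).2
  rw [← h1]
  exact h2

/-- Theorem 5.8: there exists an operator `C` with `A ⊆ CB` iff
`dom A ⊆ dom B` and `dim (mul B) ≥ dim A(dom A ∩ ker B)`. -/
theorem statement_17 (A : Submodule 𝕂 (X × Z)) (B : Submodule 𝕂 (X × Y)) :
    (∃ C : Submodule 𝕂 (Y × Z), mul C = ⊥ ∧ A ≤ comp C B) ↔
      (dom A ≤ dom B ∧
        Module.rank 𝕂 (img A (dom A ⊓ ker B)) ≤ Module.rank 𝕂 (mul B)) := by
  constructor
  · rintro ⟨C, hC, hA⟩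
    refine ⟨?_, ?_⟩
    · rintro x ⟨⟨x', z⟩, h, rfl⟩
      obtain ⟨y, h1, -⟩ := hA h
      exact ⟨(x', y), h1, rfl⟩
    · let D : Submodule 𝕂 (Y × Z) := C ⊓ (mul B).prod ⊤
      have hle : img A (dom A ⊓ ker B) ≤ D.map (LinearMap.snd 𝕂 Y Z) := by
        rintro z ⟨⟨x, z'⟩, ⟨h, hx, -⟩, rfl⟩
        obtain ⟨y, h1, h2⟩ := hA h
        have h0 : (x, (0 : Y)) ∈ B := hx.2
        refine ⟨(y, z'), ⟨h2, ?_, trivial⟩, rfl⟩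
        have := B.sub_mem h1 h0
        change ((0 : X), y) ∈ B
        simpa using this
      have hD : Module.rank 𝕂 D ≤ Module.rank 𝕂 (mul B) := by
        let φ : D →ₗ[𝕂] mul B :=
          ((LinearMap.fst 𝕂 Y Z).comp D.subtype).codRestrict (mul B) (fun p => p.2.2.1)
        refine LinearMap.rank_le_of_injective φ ?_
        rw [← LinearMap.ker_eq_bot, LinearMap.ker_eq_bot']
        rintro ⟨⟨y, z⟩, hp⟩ h
        have hy : y = 0 := congrArg Subtype.val h
        subst hy
        have hz : z ∈ mul C := hp.1
        rw [hC] at hz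
        have : z = 0 := hz
        subst this
        rfl
      exact (Submodule.rank_mono hle).trans ((rank_map_le _ _).trans hD)
  · rintro ⟨hdom, hrank⟩
    set W := img A (dom A ⊓ ker B) with hW
    -- a surjection `f : mul B → W`, extended to `Y`
    obtain ⟨i, hi⟩ := rank_le_iff_exists_linearMap.1 hrank
    obtain ⟨f, hf⟩ := LinearMap.exists_leftInverse_of_injective i (LinearMap.ker_eq_bot.2 hi)
    obtain ⟨F, hF⟩ := LinearMap.exists_extend f
    -- a section of `B → dom B`
    obtain ⟨s, hs⟩ := aux_section B
    obtain ⟨σ, hσ⟩ := LinearMap.exists_rightInverse_of_surjective W.mkQ (Submodule.range_mkQ W)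
    let ι : A →ₗ[𝕂] dom B := ((LinearMap.fst 𝕂 X Z).comp A.subtype).codRestrict (dom B)
      (fun p => hdom ⟨p.1, p.2, rfl⟩)
    let β : A →ₗ[𝕂] Y := s.comp ι
    have hβ : ∀ p : A, (p.1.1, β p) ∈ B := fun p => hs (ι p)
    obtain ⟨h, hh⟩ := aux_factor ((mul B).mkQ.comp β) (W.mkQ.comp
      ((LinearMap.snd 𝕂 X Z).comp A.subtype)) (by
        intro p hp
        have hp' : β p ∈ mul B := by simpa using hp
        have h0 : ((0 : X), β p) ∈ B := hp'
        have hk : (p.1.1, (0 : Y)) ∈ B := by simpa using B.sub_mem (hβ p) h0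
        have : p.1.2 ∈ W := ⟨p.1, ⟨p.2, ⟨⟨p.1, p.2, rfl⟩, hk⟩, trivial⟩, rfl⟩
        simpa using this)
    let g : Y →ₗ[𝕂] Z := σ.comp (h.comp (mul B).mkQ) + W.subtype.comp F
    refine ⟨g.graph, ?_, ?_⟩
    · rw [eq_bot_iff]
      intro z hz
      have hz' : ((0 : Y), z) ∈ g.graph := hz
      rw [LinearMap.mem_graph_iff] at hz'
      simpa using hz'
    · intro p hp
      have h1 : h ((mul B).mkQ (β ⟨p, hp⟩)) = W.mkQ p.2 := hh ⟨p, hp⟩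
      have hd : p.2 - g (β ⟨p, hp⟩) ∈ W := by
        rw [← Submodule.Quotient.mk_eq_zero, ← Submodule.mkQ_apply]
        have e1 : W.mkQ (σ (W.mkQ p.2)) = W.mkQ p.2 := LinearMap.congr_fun hσ _
        have e2 : W.mkQ (F (β ⟨p, hp⟩) : Z) = 0 := by simp
        have e3 : g (β ⟨p, hp⟩) = σ (W.mkQ p.2) + (F (β ⟨p, hp⟩) : Z) := by
          rw [← h1]; rfl
        rw [e3, map_sub, map_add, e1, e2]; simp
      let w : W := ⟨_, hd⟩
      have hm0 : (mul B).mkQ (i w : Y) = 0 := by simp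
      have hFw : F (i w : Y) = w := by
        have a1 : F (i w : Y) = f (i w) := LinearMap.congr_fun hF (i w)
        have a2 : f (i w) = w := LinearMap.congr_fun hf w
        rw [a1, a2]
      have hgm : g (i w : Y) = p.2 - g (β ⟨p, hp⟩) := by
        have : g (i w : Y) = σ (h ((mul B).mkQ (i w : Y))) + (F (i w : Y) : Z) := rfl
        rw [this, hm0, hFw]; simp [w]
      have hmB : ((0 : X), (i w : Y)) ∈ B := (i w).2
      refine ⟨β ⟨p, hp⟩ + i w, ?_, ?_⟩
      · simpa using B.add_mem (hβ ⟨p, hp⟩) hmB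
      · rw [LinearMap.mem_graph_iff, map_add, hgm]; simp
end

section
/- Let A be a linear relation between X and Z and B a linear relation between X and Y. The following are equivalent: (i) there exists a linear relation C between Y and Z which is (the graph of) an injective operator (mul C = {0} and ker C = {0}) such that A ⊆ C∘B; (ii) dom A ⊆ dom B, ker A ⊆ ker B, and dim(A(dom A ∩ ker B)) ≤ dim(B(ker A)) (as cardinals). -/
/-!
Linear relations between vector spaces, following Popovici–Sebestyén,
"Factorizations of Linear Relations".

A linear relation between `X` and `Y` is a linear subspace of `X × Y`,
formalized as `Submodule 𝕂 (X × Y)`.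
-/

universe u

open LinRel

variable {𝕂 : Type u} [Field 𝕂]
variable {X Y Z : Type u} [AddCommGroup X] [Module 𝕂 X]
  [AddCommGroup Y] [Module 𝕂 Y] [AddCommGroup Z] [Module 𝕂 Z]

theorem lr_pinv {V W : Type u} [AddCommGroup V] [Module 𝕂 V] [AddCommGroup W] [Module 𝕂 W]
    (f : V →ₗ[𝕂] W) : ∃ g : W →ₗ[𝕂] V, ∀ v, f (g (f v)) = f v := by
  obtain ⟨s, hs⟩ := f.rangeRestrict.exists_rightInverse_of_surjective f.range_rangeRestrict
  obtain ⟨g, hg⟩ := LinearMap.exists_extend s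
  refine ⟨g, fun v => ?_⟩
  have h1 := LinearMap.congr_fun hg (f.rangeRestrict v)
  have h2 := LinearMap.congr_fun hs (f.rangeRestrict v)
  have h3 := congrArg Subtype.val h2
  simp only [LinearMap.comp_apply, Submodule.subtype_apply, LinearMap.codRestrict_apply,
    LinearMap.rangeRestrict, LinearMap.id_apply] at h1 h3
  rw [h1]; exact h3

theorem lr_inj {V W : Type u} [AddCommGroup V] [Module 𝕂 V] [AddCommGroup W] [Module 𝕂 W]
    (h : Module.rank 𝕂 V ≤ Module.rank 𝕂 W) : ∃ f : V →ₗ[𝕂] W, Function.Injective f :=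
  rank_le_iff_exists_linearMap.1 h

theorem lr_mem_img {R : Submodule 𝕂 (X × Y)} {S : Submodule 𝕂 X} {y : Y} :
    y ∈ img R S ↔ ∃ x ∈ S, (x, y) ∈ R := by
  simp [img, ran, and_comm]

theorem lr_mem_ker {R : Submodule 𝕂 (X × Y)} {x : X} : x ∈ LinRel.ker R ↔ (x, 0) ∈ R := by
  simp [LinRel.ker]

theorem lr_mem_mul {R : Submodule 𝕂 (X × Y)} {y : Y} : y ∈ LinRel.mul R ↔ (0, y) ∈ R := by
  simp [LinRel.mul]

theorem lr_mem_dom {R : Submodule 𝕂 (X × Y)} {x : X} : x ∈ LinRel.dom R ↔ ∃ y, (x, y) ∈ R := by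
  simp [LinRel.dom]

theorem lr_mem_comp {S : Submodule 𝕂 (Y × Z)} {R : Submodule 𝕂 (X × Y)} {x : X} {z : Z} :
    (x, z) ∈ comp S R ↔ ∃ y, (x, y) ∈ R ∧ (y, z) ∈ S := Iff.rfl

/-- Corollary 5.7: there exists an injective operator `C` with `A ⊆ CB` iff
`dom A ⊆ dom B`, `ker A ⊆ ker B` and
`dim A(dom A ∩ ker B) ≤ dim B(ker A)`. -/
theorem statement_18 (A : Submodule 𝕂 (X × Z)) (B : Submodule 𝕂 (X × Y)) :
    (∃ C : Submodule 𝕂 (Y × Z), mul C = ⊥ ∧ ker C = ⊥ ∧ A ≤ comp C B) ↔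
      (dom A ≤ dom B ∧ ker A ≤ ker B ∧
        Module.rank 𝕂 (img A (dom A ⊓ ker B)) ≤ Module.rank 𝕂 (img B (ker A))) := by
  constructor
  · rintro ⟨C, hm, hk, hA⟩
    have hm' : ∀ z, (0, z) ∈ C → z = 0 := fun z h => by
      have := lr_mem_mul.2 h
      rwa [hm, Submodule.mem_bot] at this
    have hk' : ∀ y, (y, 0) ∈ C → y = 0 := fun y h => by
      have := lr_mem_ker.2 h
      rwa [hk, Submodule.mem_bot] at this
    refine ⟨?_, ?_, ?_⟩
    · intro x hx
      obtain ⟨z, hz⟩ := lr_mem_dom.1 hx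
      obtain ⟨y, hy, -⟩ := lr_mem_comp.1 (hA hz)
      exact lr_mem_dom.2 ⟨y, hy⟩
    · intro x hx
      obtain ⟨y, hy, hy'⟩ := lr_mem_comp.1 (hA (lr_mem_ker.1 hx))
      rw [hk' y hy'] at hy
      exact lr_mem_ker.2 hy
    · obtain ⟨t, ht⟩ := lr_pinv ((LinearMap.snd 𝕂 Y Z).comp C.subtype)
      have key : ∀ z ∈ img A (dom A ⊓ ker B), (((t z).1.1, z) ∈ C) ∧ (t z).1.1 ∈ img B (ker A) := by
        intro z hz
        obtain ⟨x, ⟨-, hxB⟩, hxz⟩ := lr_mem_img.1 hz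
        obtain ⟨y, hy, hy'⟩ := lr_mem_comp.1 (hA hxz)
        have h1 : (t z).1.2 = z := ht ⟨(y, z), hy'⟩
        have h2 : ((t z).1.1, z) ∈ C := by
          have := (t z).2
          rwa [← Prod.mk.eta (p := (t z).1), h1] at this
        refine ⟨h2, ?_⟩
        have h3 : (t z).1.1 = y := by
          have := C.sub_mem h2 hy'
          simp only [Prod.mk_sub_mk, sub_self] at this
          exact sub_eq_zero.1 (hk' _ this)
        rw [h3]
        refine lr_mem_img.2 ⟨0, Submodule.zero_mem _, ?_⟩
        have := B.sub_mem hy (lr_mem_ker.1 hxB)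
        simpa using this
      let F : img A (dom A ⊓ ker B) →ₗ[𝕂] img B (ker A) :=
        (((LinearMap.fst 𝕂 Y Z).comp C.subtype).comp t).restrict (fun z hz => (key z hz).2)
      refine LinearMap.rank_le_of_injective F ?_
      rw [injective_iff_map_eq_zero]
      rintro ⟨z, hz⟩ h
      have h0 : (t z).1.1 = 0 := congrArg Subtype.val h
      have h1 := (key z hz).1
      rw [h0] at h1
      exact Subtype.ext (hm' z h1)
  · rintro ⟨hd, hk, hr⟩
    obtain ⟨f, hf⟩ := lr_inj hr
    obtain ⟨P, hP⟩ := (img A (dom A ⊓ ker B)).subtype.exists_leftInverse_of_injective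
      (Submodule.ker_subtype _)
    obtain ⟨s, hs⟩ := lr_pinv ((LinearMap.snd 𝕂 X Z).comp A.subtype)
    obtain ⟨t, ht⟩ := lr_pinv ((LinearMap.fst 𝕂 X Y).comp B.subtype)
    have hmul : ∀ y ∈ img B (ker A), (0, y) ∈ B := by
      intro y hy
      obtain ⟨x, hx, hxy⟩ := lr_mem_img.1 hy
      simpa using B.sub_mem hxy (lr_mem_ker.1 (hk hx))
    let g : Z →ₗ[𝕂] Y := ((LinearMap.snd 𝕂 X Y).comp B.subtype).comp
      (t.comp (((LinearMap.fst 𝕂 X Z).comp A.subtype).comp s))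
    have hg : ∀ x z, (x, z) ∈ A → (x, g z) ∈ B := by
      intro x z h
      have h1 : (s z).1.2 = z := hs ⟨(x, z), h⟩
      have h2 : ((s z).1.1, z) ∈ A := by
        have := (s z).2
        rwa [← Prod.mk.eta (p := (s z).1), h1] at this
      obtain ⟨y, hy⟩ := lr_mem_dom.1 (hd (lr_mem_dom.2 ⟨z, h2⟩))
      have h3 : (t (s z).1.1).1.1 = (s z).1.1 := ht ⟨((s z).1.1, y), hy⟩
      have h4 : ((s z).1.1, g z) ∈ B := by
        have := (t (s z).1.1).2
        rwa [← Prod.mk.eta (p := (t (s z).1.1).1), h3] at this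
      have h5 : x - (s z).1.1 ∈ ker A := by
        have := A.sub_mem h h2
        simp only [Prod.mk_sub_mk, sub_self] at this
        exact lr_mem_ker.2 this
      simpa using B.add_mem (lr_mem_ker.1 (hk h5)) h4
    have hgN : ∀ n ∈ img A (dom A ⊓ ker B), (0, g n) ∈ B := by
      intro n hn
      obtain ⟨x, ⟨-, hxB⟩, hxz⟩ := lr_mem_img.1 hn
      simpa using B.sub_mem (hg x n hxz) (lr_mem_ker.1 hxB)
    let ψ : Z →ₗ[𝕂] Y := g - g.comp ((Submodule.subtype _).comp P) +
      (Submodule.subtype _).comp (f.comp P)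
    have hψ : ∀ z, ψ z = g z - g (P z) + f (P z) := fun z => rfl
    have hψB : ∀ x z, (x, z) ∈ A → (x, ψ z) ∈ B := by
      intro x z h
      have := B.add_mem (B.sub_mem (hg x z h) (hgN _ (P z).2)) (hmul _ (f (P z)).2)
      simpa [hψ] using this
    have hψ0 : ∀ x z, (x, z) ∈ A → ψ z = 0 → z = 0 := by
      intro x z h h0
      have h1 := hψB x z h
      rw [h0] at h1
      have hz : z ∈ img A (dom A ⊓ ker B) :=
        lr_mem_img.2 ⟨x, ⟨lr_mem_dom.2 ⟨z, h⟩, lr_mem_ker.2 h1⟩, h⟩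
      have hPz : P z = ⟨z, hz⟩ := LinearMap.congr_fun hP ⟨z, hz⟩
      rw [hψ, hPz, sub_self, zero_add] at h0
      have h2 : f ⟨z, hz⟩ = 0 := Subtype.ext h0
      exact congrArg Subtype.val ((injective_iff_map_eq_zero f).1 hf _ h2)
    have hC : ∀ y z, (y, z) ∈ (ran A).map (ψ.prod LinearMap.id) ↔ (∃ x, (x, z) ∈ A) ∧ y = ψ z := by
      intro y z
      simp only [ran, Submodule.mem_map]
      constructor
      · rintro ⟨_, ⟨⟨x, z'⟩, h, rfl⟩, he⟩
        obtain ⟨rfl, rfl⟩ := Prod.mk.inj he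
        exact ⟨⟨x, h⟩, rfl⟩
      · rintro ⟨⟨x, h⟩, rfl⟩
        exact ⟨z, ⟨(x, z), h, rfl⟩, rfl⟩
    refine ⟨(ran A).map (ψ.prod LinearMap.id), ?_, ?_, ?_⟩
    · rw [eq_bot_iff]
      intro z hz
      obtain ⟨⟨x, h⟩, h0⟩ := (hC _ _).1 (lr_mem_mul.1 hz)
      exact hψ0 x z h h0.symm
    · rw [eq_bot_iff]
      intro y hy
      obtain ⟨-, h0⟩ := (hC _ _).1 (lr_mem_ker.1 hy)
      rw [map_zero] at h0
      exact h0
    · rintro ⟨x, z⟩ h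
      exact lr_mem_comp.2 ⟨ψ z, hψB x z h, (hC _ _).2 ⟨⟨x, h⟩, rfl⟩⟩
end

section
/- Let R be a linear relation between X and Y, and let Δ_{ran R} := {(y,y) | y ∈ ran R}, a linear relation between Y and Y. The following are equivalent: (i) there exists a linear relation C between X and Y which is (the graph of) an operator such that Δ_{ran R} ⊆ C∘(R⁻¹); (ii) there exists a linear relation C ⊆ R which is (the graph of) an operator with ran C = ran R; (iii) dim(ker R) ≥ dim(mul R) (as cardinals). -/
/-!
Linear relations between vector spaces, following Popovici–Sebestyén,
"Factorizations of Linear Relations".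

A linear relation between `X` and `Y` is a linear subspace of `X × Y`,
formalized as `Submodule 𝕂 (X × Y)`.
-/

universe u

open LinRel

variable {𝕂 : Type u} [Field 𝕂]
variable {X Y Z : Type u} [AddCommGroup X] [Module 𝕂 X]
  [AddCommGroup Y] [Module 𝕂 Y] [AddCommGroup Z] [Module 𝕂 Z]

theorem LinRel.exists_selector (R : Submodule 𝕂 (X × Y)) :
    ∃ g : Y →ₗ[𝕂] X, ∀ y ∈ ran R, (g y, y) ∈ R := by
  let f : R →ₗ[𝕂] Y := (LinearMap.snd 𝕂 X Y).comp R.subtype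
  obtain ⟨s, hs⟩ := f.rangeRestrict.exists_rightInverse_of_surjective f.range_rangeRestrict
  obtain ⟨g, hg⟩ := LinearMap.exists_extend
    (((LinearMap.fst 𝕂 X Y).comp R.subtype).comp s)
  refine ⟨g, fun y hy => ?_⟩
  obtain ⟨p, hp, rfl⟩ := hy
  have hy' : p.2 ∈ LinearMap.range f := ⟨⟨p, hp⟩, rfl⟩
  have h1 := LinearMap.congr_fun hg ⟨p.2, hy'⟩
  have h2 := congrArg Subtype.val (LinearMap.congr_fun hs ⟨p.2, hy'⟩)
  have h3 := (s ⟨p.2, hy'⟩).2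
  have h4 : ((g p.2, p.2) : X × Y) = (s ⟨p.2, hy'⟩ : X × Y) := Prod.ext h1 h2.symm
  change (g p.2, p.2) ∈ R
  rw [h4]
  exact h3

theorem LinRel.mem_mul (R : Submodule 𝕂 (X × Y)) (y : Y) : y ∈ mul R ↔ ((0 : X), y) ∈ R :=
  Iff.rfl

theorem LinRel.mem_ker (R : Submodule 𝕂 (X × Y)) (x : X) : x ∈ ker R ↔ (x, (0 : Y)) ∈ R :=
  Iff.rfl

/-- Corollary 5.10: with `Δ_{ran R} = {(y, y) | y ∈ ran R}`, there exists an
operator `C` with `Δ_{ran R} ⊆ C R⁻¹` iff there exists an operator `C ⊆ R`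
with `ran C = ran R`, iff `dim (ker R) ≥ dim (mul R)`. -/
theorem statement_19 (R : Submodule 𝕂 (X × Y)) :
    ((∃ C : Submodule 𝕂 (X × Y), mul C = ⊥ ∧
        (ran R).map ((LinearMap.id : Y →ₗ[𝕂] Y).prod (LinearMap.id : Y →ₗ[𝕂] Y))
          ≤ comp C (inv R)) ↔
      (∃ C : Submodule 𝕂 (X × Y), C ≤ R ∧ mul C = ⊥ ∧ ran C = ran R)) ∧
    ((∃ C : Submodule 𝕂 (X × Y), C ≤ R ∧ mul C = ⊥ ∧ ran C = ran R) ↔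
      Module.rank 𝕂 (mul R) ≤ Module.rank 𝕂 (ker R)) := by
  refine ⟨⟨?_, ?_⟩, ⟨?_, ?_⟩⟩
  · rintro ⟨C, hC, h⟩
    refine ⟨C ⊓ R, inf_le_right, ?_, ?_⟩
    · rw [eq_bot_iff, ← hC]
      exact fun y hy => hy.1
    · apply le_antisymm
      · exact Submodule.map_mono inf_le_right
      · intro y hy
        obtain ⟨x, ⟨⟨a, b⟩, hab, he⟩, hx⟩ := h (Submodule.mem_map_of_mem hy)
        obtain ⟨h1, h2⟩ := Prod.mk.inj he
        simp only [LinearMap.snd_apply, LinearMap.fst_apply] at h1 h2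
        exact ⟨(x, y), ⟨hx, by rw [← h2]; convert hab using 2; exact h1.symm⟩, rfl⟩
  · rintro ⟨C, hCR, hC, h⟩
    refine ⟨C, hC, ?_⟩
    rintro _ ⟨y, hy, rfl⟩
    have hy' : y ∈ ran C := h ▸ hy
    obtain ⟨⟨x, y⟩, hxy, rfl⟩ := hy'
    exact ⟨x, ⟨(x, y), hCR hxy, rfl⟩, hxy⟩
  · rintro ⟨C, hCR, hC, h⟩
    obtain ⟨g, hg⟩ := exists_selector C
    have hran : ∀ y ∈ mul R, (g y, y) ∈ C := fun y hy =>
      hg y (h ▸ (⟨(0, y), hy, rfl⟩ : y ∈ ran R))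
    have hk : ∀ y ∈ mul R, g y ∈ ker R := by
      intro y hy
      have := R.sub_mem (hCR (hran y hy)) ((mem_mul R y).1 hy)
      simpa [mem_ker] using this
    refine LinearMap.rank_le_of_injective (g.restrict hk) ?_
    rw [injective_iff_map_eq_zero]
    rintro ⟨y, hy⟩ h0
    have h0' : g y = 0 := congrArg Subtype.val h0
    have h1 := hran y hy
    rw [h0', ← mem_mul, hC] at h1
    exact Subtype.ext h1
  · intro hle
    obtain ⟨j, hj⟩ := rank_le_iff_exists_linearMap.1 hle
    obtain ⟨g, hg⟩ := exists_selector R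
    obtain ⟨P, hP⟩ := (mul R).subtype.exists_leftInverse_of_injective (mul R).ker_subtype
    have hP' : ∀ m : mul R, P m = m := fun m => LinearMap.congr_fun hP m
    have hw : ∀ y ∈ ran R, (g (y - P y), y - (P y : Y)) ∈ R := fun y hy =>
      hg _ ((ran R).sub_mem hy ⟨(0, (P y : Y)), (P y).2, rfl⟩)
    let t : Y →ₗ[𝕂] X := g.comp (LinearMap.id - (mul R).subtype.comp P) +
      ((ker R).subtype.comp j).comp P
    have ht : ∀ y, t y = g (y - P y) + j (P y) := fun y => rfl
    refine ⟨(ran R).map (t.prod LinearMap.id), ?_, ?_, ?_⟩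
    · rintro _ ⟨y, hy, rfl⟩
      have h1 := R.add_mem (R.add_mem (hw y hy) ((mem_ker R _).1 (j (P y)).2))
        ((mem_mul R _).1 (P y).2)
      simpa [ht] using h1
    · rw [eq_bot_iff]
      rintro z ⟨y, hy, he⟩
      obtain ⟨h1, h2⟩ := Prod.mk.inj he
      change t y = 0 at h1
      change y = z at h2
      subst h2
      rw [ht] at h1
      have h3 := R.add_mem (hw y hy) ((mem_ker R _).1 (j (P y)).2)
      rw [Prod.mk_add_mk, h1, add_zero, ← mem_mul] at h3
      have h4 : P (y - P y) = ⟨_, h3⟩ := hP' ⟨_, h3⟩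
      rw [map_sub, hP', sub_self] at h4
      have h5 : y - (P y : Y) = 0 := (congrArg Subtype.val h4).symm
      rw [h5, map_zero, zero_add] at h1
      have h6 : P y = 0 := hj (by rw [map_zero]; exact Subtype.ext h1)
      rw [h6] at h5
      simpa using h5
    · apply le_antisymm
      · rintro _ ⟨_, ⟨y, hy, rfl⟩, rfl⟩
        exact hy
      · intro y hy
        exact ⟨_, ⟨y, hy, rfl⟩, rfl⟩
end
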